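/- The centralized and normalized number of non-zero-blocks is asymptotically standard normal: for every real x, P(ξ_n ≤ E_n + x·√V_n) = Σ_{k : k ≤ E_n + x·√V_n} T_{n,k}/T_n converges, as n → ∞, to Φ(x) = (1/√(2π))·∫_{−∞}^{x} e^{−t²/2} dt, the cumulative distribution function of the standard normal distribution. -/

import Mathlib

open Filter MeasureTheory

def Tnk (m c : ℕ) : ℕ → ℕ → ℕ
  | 0, 0 => 1
  | 0, _ + 1 => 0
  | n + 1, 0 => c * Tnk m c n 0
  | n + 1, k + 1 => Tnk m c n k + (m * (k + 1) + c) * Tnk m c n (k + 1)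

def Ttot (m c n : ℕ) : ℕ := ∑ k ∈ Finset.range (n + 1), Tnk m c n k

/-- The expectation `E_n = (∑_k k·T_{n,k})/T_n`. -/
noncomputable def En (m c n : ℕ) : ℝ :=
  (∑ k ∈ Finset.range (n + 1), (k : ℝ) * Tnk m c n k) / Ttot m c n

/-- The variance `V_n = (∑_k k²·T_{n,k})/T_n − E_n²`. -/
noncomputable def Vn (m c n : ℕ) : ℝ :=
  (∑ k ∈ Finset.range (n + 1), (k : ℝ) ^ 2 * Tnk m c n k) / Ttot m c n -
    En m c n ^ 2

/-!
The row polynomial `∑ k, T_{n,k} X ^ k` is real-rooted with nonpositive roots, since each row is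
`(X + c) F + m X F'` for the previous row `F` and this operation preserves nonpositive roots.
Hence `ξ_n` is distributed as a sum of independent Bernoulli variables, and by Harper's method
(comparison of characteristic functions) it is enough that the variance tends to infinity.

For the variance, Dobiński's formula writes `e ^ (1 / m) T_n` as the sum of the weights
`w j = (m j + c) ^ n m ^ (-j) / j!`, under which the node `m j + c` has variance `m + m ^ 2 V_n`.
The score `w (j - 1) / w j` grows slowly in the node, so a covariance inequality of Cramér–Rao type
bounds this variance below by a multiple of `n T_n / T_{n+1}`, and `T_{n+1} / T_n = o(n)`.
-/

open Polynomial
open scoped Topology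

/-- The mean `(∑ k·a_k)/(∑ a_k)` of the law on `ℕ` whose probability generating function is
proportional to `F = ∑ a_k X^k`, written with the Euler operator `X·d/dX`. -/
noncomputable def pgfMean (F : ℝ[X]) : ℝ := (X * derivative F).eval 1 / F.eval 1

/-- The variance `(∑ k²·a_k)/(∑ a_k) - (pgfMean F)²` of the law on `ℕ` whose probability
generating function is proportional to `F = ∑ a_k X^k`. -/
noncomputable def pgfVariance (F : ℝ[X]) : ℝ :=
  (X * derivative (X * derivative F)).eval 1 / F.eval 1 - pgfMean F ^ 2

lemma coeff_X_mul_derivative {R : Type*} [CommSemiring R] (F : R[X]) (k : ℕ) :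
    (X * derivative F).coeff k = k * F.coeff k := by
  cases k with
  | zero => simp
  | succ k => simp [coeff_X_mul, coeff_derivative, mul_comm]

lemma natDegree_X_mul_derivative_le {R : Type*} [CommSemiring R] (F : R[X]) :
    (X * derivative F).natDegree ≤ F.natDegree :=
  natDegree_le_iff_coeff_eq_zero.2 fun k hk => by
    rw [coeff_X_mul_derivative, coeff_eq_zero_of_natDegree_lt hk, mul_zero]

lemma eval_one_eq_sum_range {R : Type*} [Semiring R] {F : R[X]} {n : ℕ} (hn : F.natDegree ≤ n) :
    F.eval 1 = ∑ k ∈ Finset.range (n + 1), F.coeff k := by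
  simp [eval_eq_sum_range' (Nat.lt_succ_of_le hn)]

lemma sum_coeff_div_eval_one {K : Type*} [Semifield K] {F : K[X]} (hF : F.eval 1 ≠ 0) {n : ℕ}
    (hn : F.natDegree ≤ n) :
    ∑ k ∈ Finset.range (n + 1), F.coeff k / F.eval 1 = 1 := by
  rw [← Finset.sum_div, ← eval_one_eq_sum_range hn, div_self hF]

lemma pgfMean_eq_sum {F : ℝ[X]} {n : ℕ} (hn : F.natDegree ≤ n) :
    pgfMean F = (∑ k ∈ Finset.range (n + 1), (k : ℝ) * F.coeff k) /
      ∑ k ∈ Finset.range (n + 1), F.coeff k := by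
  rw [pgfMean, eval_one_eq_sum_range hn,
    eval_one_eq_sum_range ((natDegree_X_mul_derivative_le F).trans hn)]
  simp only [coeff_X_mul_derivative]

lemma pgfVariance_eq_sum {F : ℝ[X]} {n : ℕ} (hn : F.natDegree ≤ n) :
    pgfVariance F = (∑ k ∈ Finset.range (n + 1), (k : ℝ) ^ 2 * F.coeff k) /
      (∑ k ∈ Finset.range (n + 1), F.coeff k) - pgfMean F ^ 2 := by
  have hn' := (natDegree_X_mul_derivative_le F).trans hn
  rw [pgfVariance, eval_one_eq_sum_range hn,
    eval_one_eq_sum_range ((natDegree_X_mul_derivative_le _).trans hn')]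
  simp only [coeff_X_mul_derivative, sq, mul_assoc]

lemma pgfMean_mul {F G : ℝ[X]} (hF : F.eval 1 ≠ 0) (hG : G.eval 1 ≠ 0) :
    pgfMean (F * G) = pgfMean F + pgfMean G := by
  simp only [pgfMean, derivative_mul, eval_mul, eval_add, eval_X]
  field_simp

lemma pgfVariance_mul {F G : ℝ[X]} (hF : F.eval 1 ≠ 0) (hG : G.eval 1 ≠ 0) :
    pgfVariance (F * G) = pgfVariance F + pgfVariance G := by
  simp only [pgfVariance, pgfMean, derivative_mul, derivative_add, derivative_X, eval_mul,
    eval_add, eval_X, eval_one]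
  field_simp
  ring

lemma pgfMean_X_add_C (r : ℝ) : pgfMean (X + C r) = (1 + r)⁻¹ := by
  simp [pgfMean]

lemma pgfVariance_X_add_C (r : ℝ) : pgfVariance (X + C r) = (1 + r)⁻¹ * (1 - (1 + r)⁻¹) := by
  rw [pgfVariance, pgfMean_X_add_C]
  simp only [derivative_add, derivative_X, derivative_C, add_zero, mul_one, eval_add, eval_X,
    eval_C]
  ring

/-- The monic real polynomials all of whose complex zeros are real and nonpositive. -/
noncomputable def nonposRootSubmonoid : Submonoid ℝ[X] :=
  Submonoid.closure {F | ∃ r : ℝ, 0 ≤ r ∧ X + C r = F}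

namespace nonposRootSubmonoid

lemma X_add_C_mem {r : ℝ} (hr : 0 ≤ r) : X + C r ∈ nonposRootSubmonoid :=
  Submonoid.subset_closure ⟨r, hr, rfl⟩

@[elab_as_elim]
lemma induction {p : ∀ F ∈ nonposRootSubmonoid, Prop}
    (linear : ∀ (r : ℝ) (hr : 0 ≤ r), p (X + C r) (X_add_C_mem hr))
    (one : p 1 (one_mem _))
    (mul : ∀ F G hF hG, p F hF → p G hG → p (F * G) (mul_mem hF hG))
    {F : ℝ[X]} (hF : F ∈ nonposRootSubmonoid) : p F hF := by
  induction hF using Submonoid.closure_induction with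
  | mem F hF => obtain ⟨r, hr, rfl⟩ := hF; exact linear r hr
  | one => exact one
  | mul F G hF hG ihF ihG => exact mul F G hF hG ihF ihG

variable {F : ℝ[X]}

lemma monic (hF : F ∈ nonposRootSubmonoid) : F.Monic := by
  induction hF using nonposRootSubmonoid.induction with
  | linear r _ => exact monic_X_add_C r
  | one => exact monic_one
  | mul F G _ _ hF hG => exact hF.mul hG

lemma eval_one_pos (hF : F ∈ nonposRootSubmonoid) : 0 < F.eval 1 := by
  induction hF using nonposRootSubmonoid.induction with
  | linear r hr => simp only [eval_add, eval_X, eval_C]; positivity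
  | one => simp
  | mul F G _ _ hF hG => rw [eval_mul]; positivity

lemma coeff_nonneg (hF : F ∈ nonposRootSubmonoid) (k : ℕ) : 0 ≤ F.coeff k := by
  induction hF using nonposRootSubmonoid.induction generalizing k with
  | linear r hr => rw [coeff_add, coeff_X, coeff_C]; positivity
  | one => rw [coeff_one]; positivity
  | mul F G _ _ hF hG => rw [coeff_mul]; exact Finset.sum_nonneg fun _ _ => mul_nonneg (hF _) (hG _)

lemma pgfVariance_nonneg (hF : F ∈ nonposRootSubmonoid) : 0 ≤ pgfVariance F := by
  induction hF using nonposRootSubmonoid.induction with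
  | linear r hr =>
    have : (1 + r)⁻¹ ≤ 1 := inv_le_one_of_one_le₀ (by linarith)
    rw [pgfVariance_X_add_C]
    exact mul_nonneg (by positivity) (sub_nonneg.2 this)
  | one => simp [pgfVariance, pgfMean]
  | mul F G hF hG ihF ihG =>
    rw [pgfVariance_mul (eval_one_pos hF).ne' (eval_one_pos hG).ne']
    exact add_nonneg ihF ihG

lemma mem_of_aeval_ne_zero (hF : F.Monic) (h : ∀ z ∈ Complex.slitPlane, aeval z F ≠ 0) :
    F ∈ nonposRootSubmonoid := by
  have root_nonpos {z : ℂ} (hz : z ∈ (F.map (algebraMap ℝ ℂ)).roots) :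
      z.re ≤ 0 ∧ z.im = 0 := by
    have hz' : z ∉ Complex.slitPlane := fun hmem =>
      h z hmem (by rw [aeval_def, eval₂_eq_eval_map]; exact isRoot_of_mem_roots hz)
    rw [Complex.mem_slitPlane_iff] at hz'
    grind
  have hsplit : F.Splits :=
    (IsAlgClosed.splits _).of_splits_map (algebraMap ℝ ℂ) fun z hz =>
      ⟨z.re, Complex.ext rfl (root_nonpos hz).2.symm⟩
  rw [hsplit.eq_prod_roots_of_monic hF]
  refine Submonoid.multiset_prod_mem _ _ fun G hG => ?_
  obtain ⟨a, ha, rfl⟩ := Multiset.mem_map.1 hG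
  have hroot : (a : ℂ) ∈ (F.map (algebraMap ℝ ℂ)).roots :=
    (mem_roots (hF.map _).ne_zero).2 ((isRoot_of_mem_roots ha).map (f := algebraMap ℝ ℂ))
  have ha : a ≤ 0 := by simpa using (root_nonpos hroot).1
  simpa [sub_eq_add_neg] using X_add_C_mem (neg_nonneg.2 ha)

end nonposRootSubmonoid

lemma exists_re_pos_sq_eq {z : ℂ} (hz : z ∈ Complex.slitPlane) :
    ∃ u : ℂ, 0 < u.re ∧ u ^ 2 = z := by
  refine ⟨z ^ (2⁻¹ : ℂ), ?_, by simp⟩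
  have : 0 < ‖z‖ + z.re := by
    rcases Complex.mem_slitPlane_iff.1 hz with hre | him
    · positivity
    · linarith [neg_abs_le z.re, Complex.abs_re_lt_norm.2 him]
  rw [Complex.cpow_inv_two_re]
  positivity

lemma re_ofReal_mul_inv_nonneg {r : ℝ} (hr : 0 ≤ r) {u : ℂ} (hu : 0 ≤ u.re) :
    0 ≤ (r * u⁻¹).re := by
  rw [Complex.re_ofReal_mul, Complex.inv_re]
  exact mul_nonneg hr (div_nonneg hu (Complex.normSq_nonneg u))

namespace nonposRootSubmonoid

variable {F : ℝ[X]}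

lemma aeval_sq_ne_zero (hF : F ∈ nonposRootSubmonoid) {u : ℂ} (hu : 0 < u.re) :
    aeval (u ^ 2) F ≠ 0 := by
  induction hF using nonposRootSubmonoid.induction with
  | linear r hr =>
    intro h
    have hu2 : u ^ 2 = (-r : ℝ) := by
      push_cast
      exact eq_neg_of_add_eq_zero_left (by simpa using h)
    have him : u.im = 0 := by
      have := congrArg Complex.im hu2
      simp only [sq, Complex.mul_im, Complex.ofReal_im] at this
      nlinarith
    have hre := congrArg Complex.re hu2
    simp only [sq, Complex.mul_re, Complex.ofReal_re, him] at hre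
    nlinarith
  | one => simp
  | mul F G _ _ hF hG => rw [map_mul]; exact mul_ne_zero hF hG

-- For a linear factor this reads `Re (u / (u ^ 2 + r)) ≥ 0`, and `(u ^ 2 + r) / u = u + r / u`.
lemma re_mul_logDeriv_nonneg (hF : F ∈ nonposRootSubmonoid) {u : ℂ} (hu : 0 < u.re) :
    0 ≤ (u * aeval (u ^ 2) (derivative F) / aeval (u ^ 2) F).re := by
  induction hF using nonposRootSubmonoid.induction with
  | linear r hr =>
    have hu0 : u ≠ 0 := by rintro rfl; simp at hu
    have hne := aeval_sq_ne_zero (X_add_C_mem hr) hu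
    simp only [map_add, aeval_X, aeval_C, Complex.coe_algebraMap] at hne
    have : u / (u ^ 2 + r) = (u + r * u⁻¹)⁻¹ := by field_simp
    rw [derivative_X_add_C]
    simp only [map_one, mul_one, map_add, aeval_X, aeval_C, Complex.coe_algebraMap]
    rw [this, Complex.inv_re]
    refine div_nonneg ?_ (Complex.normSq_nonneg _)
    rw [Complex.add_re]
    exact add_nonneg hu.le (re_ofReal_mul_inv_nonneg hr hu.le)
  | one => simp
  | mul F G hF hG ihF ihG =>
    have hF0 := aeval_sq_ne_zero hF hu
    have hG0 := aeval_sq_ne_zero hG hu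
    convert! add_nonneg ihF ihG using 1
    rw [← Complex.add_re, derivative_mul]
    simp only [map_add, map_mul]
    congr 1
    field_simp

theorem X_add_C_mul_add_mem (hF : F ∈ nonposRootSubmonoid) {m c : ℝ} (hm : 0 ≤ m) (hc : 0 ≤ c) :
    (X + C c) * F + C m * (X * derivative F) ∈ nonposRootSubmonoid := by
  have hdeg : (C m * (X * derivative F)).degree < ((X + C c) * F).degree := by
    have : (C m * (X * derivative F)).natDegree ≤ F.natDegree :=
      (natDegree_C_mul_le _ _).trans (natDegree_X_mul_derivative_le F)
    rw [degree_mul (p := X + C c), degree_X_add_C, degree_eq_natDegree (monic hF).ne_zero]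
    exact (degree_le_of_natDegree_le this).trans_lt (by norm_cast; omega)
  refine mem_of_aeval_ne_zero (((monic_X_add_C c).mul (monic hF)).add_of_left hdeg)
    fun z hz h0 => ?_
  obtain ⟨u, hu, rfl⟩ := exists_re_pos_sq_eq hz
  have hu0 : u ≠ 0 := by rintro rfl; simp at hu
  have hF0 := aeval_sq_ne_zero hF hu
  have hquot : u + c * u⁻¹ + m * (u * aeval (u ^ 2) (derivative F) / aeval (u ^ 2) F) = 0 := by
    simp only [map_add, map_mul, aeval_X, aeval_C, Complex.coe_algebraMap] at h0
    field_simp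
    linear_combination h0
  have hcu := re_ofReal_mul_inv_nonneg hc hu.le
  have hlog := mul_nonneg hm (re_mul_logDeriv_nonneg hF hu)
  rw [← Complex.re_ofReal_mul] at hlog
  have := congrArg Complex.re hquot
  rw [Complex.add_re, Complex.add_re, Complex.zero_re] at this
  linarith

end nonposRootSubmonoid

/-- The characteristic function `t ↦ E[exp(i t (ξ - E ξ))]` of the centering of a variable `ξ`
whose probability generating function is proportional to `F`. -/
noncomputable def centeredCharFun (F : ℝ[X]) (t : ℝ) : ℂ :=
  Complex.exp ((-(pgfMean F * t) : ℝ) * Complex.I) * aeval (Complex.exp (t * Complex.I)) F /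
    (F.eval 1 : ℝ)

lemma centeredCharFun_eq_sum {F : ℝ[X]} {n : ℕ} (hn : F.natDegree ≤ n) (t : ℝ) :
    centeredCharFun F t = ∑ k ∈ Finset.range (n + 1), ((F.coeff k / F.eval 1 : ℝ) : ℂ) *
      Complex.exp (((k - pgfMean F) * t : ℝ) * Complex.I) := by
  rw [centeredCharFun, aeval_eq_sum_range' (Nat.lt_succ_of_le hn), Finset.mul_sum, Finset.sum_div]
  refine Finset.sum_congr rfl fun k _ => ?_
  have hexp : Complex.exp (((k - pgfMean F) * t : ℝ) * Complex.I) =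
      Complex.exp ((-(pgfMean F * t) : ℝ) * Complex.I) * Complex.exp (t * Complex.I) ^ k := by
    rw [← Complex.exp_nat_mul, ← Complex.exp_add]
    congr 1
    push_cast
    ring
  rw [hexp, Complex.real_smul]
  push_cast
  ring

lemma centeredCharFun_one (t : ℝ) : centeredCharFun 1 t = 1 := by
  simp [centeredCharFun, pgfMean]

lemma centeredCharFun_mul {F G : ℝ[X]} (hF : F.eval 1 ≠ 0) (hG : G.eval 1 ≠ 0) (t : ℝ) :
    centeredCharFun (F * G) t = centeredCharFun F t * centeredCharFun G t := by
  have hexp : Complex.exp ((-(pgfMean (F * G) * t) : ℝ) * Complex.I) =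
      Complex.exp ((-(pgfMean F * t) : ℝ) * Complex.I) *
        Complex.exp ((-(pgfMean G * t) : ℝ) * Complex.I) := by
    rw [← Complex.exp_add, pgfMean_mul hF hG]
    congr 1
    push_cast
    ring
  rw [centeredCharFun, hexp, map_mul, eval_mul]
  simp only [centeredCharFun]
  push_cast
  ring

lemma centeredCharFun_X_add_C {r : ℝ} (hr : 0 ≤ r) (t : ℝ) :
    centeredCharFun (X + C r) t =
      ((1 - (1 + r)⁻¹ : ℝ) : ℂ) * Complex.exp ((-((1 + r)⁻¹ * t) : ℝ) * Complex.I) +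
        ((1 + r)⁻¹ : ℝ) * Complex.exp (((1 - (1 + r)⁻¹) * t : ℝ) * Complex.I) := by
  have h1r : ((1 + r : ℝ) : ℂ) ≠ 0 := by
    norm_cast
    positivity
  have hexp : Complex.exp (((1 - (1 + r)⁻¹) * t : ℝ) * Complex.I) =
      Complex.exp ((-((1 + r)⁻¹ * t) : ℝ) * Complex.I) * Complex.exp (t * Complex.I) := by
    rw [← Complex.exp_add]
    congr 1
    push_cast
    ring
  rw [hexp, centeredCharFun, pgfMean_X_add_C]
  simp only [map_add, aeval_X, aeval_C, Complex.coe_algebraMap, eval_add, eval_X, eval_C]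
  push_cast at h1r ⊢
  field_simp
  ring

lemma norm_centeredCharFun_le_one {F : ℝ[X]} (hF : F ∈ nonposRootSubmonoid) (t : ℝ) :
    ‖centeredCharFun F t‖ ≤ 1 := by
  have hF1 := nonposRootSubmonoid.eval_one_pos hF
  rw [centeredCharFun_eq_sum le_rfl]
  refine (norm_sum_le_of_le _ fun k _ => ?_).trans
    (sum_coeff_div_eval_one hF1.ne' le_rfl).le
  have := div_nonneg (nonposRootSubmonoid.coeff_nonneg hF k) hF1.le
  rw [norm_mul, Complex.norm_exp_ofReal_mul_I, mul_one, Complex.norm_of_nonneg this]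

lemma norm_exp_mul_I_sub_taylor_le {x : ℝ} (hx : |x| ≤ 1) :
    ‖Complex.exp (x * Complex.I) - (1 + x * Complex.I - x ^ 2 / 2)‖ ≤ |x| ^ 3 / 4 := by
  have hbound := Complex.exp_bound (x := x * Complex.I) (by simpa using hx) (n := 3) (by norm_num)
  have hsum : ∑ k ∈ Finset.range 3, ((x : ℂ) * Complex.I) ^ k / (k.factorial : ℂ) =
      1 + x * Complex.I - x ^ 2 / 2 := by
    simp [Finset.sum_range_succ, Nat.factorial, mul_pow]
    ring
  rw [hsum] at hbound
  refine hbound.trans ?_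
  simp only [norm_mul, Complex.norm_real, Real.norm_eq_abs, Complex.norm_I, mul_one,
    Nat.succ_eq_add_one, Nat.factorial]
  norm_num
  nlinarith [pow_nonneg (abs_nonneg x) 3]

lemma norm_bernoulli_sub_taylor_le {p t : ℝ} (h0 : 0 ≤ p) (h1 : p ≤ 1) (ht : |t| ≤ 1) :
    ‖((1 - p : ℝ) : ℂ) * Complex.exp ((-(p * t) : ℝ) * Complex.I) +
        (p : ℂ) * Complex.exp (((1 - p) * t : ℝ) * Complex.I) -
        ((1 - p * (1 - p) * t ^ 2 / 2 : ℝ) : ℂ)‖ ≤ p * (1 - p) * |t| ^ 3 / 4 := by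
  have hq : 0 ≤ 1 - p := sub_nonneg.2 h1
  have hp_abs : |-(p * t)| = p * |t| := by rw [abs_neg, abs_mul, abs_of_nonneg h0]
  have hq_abs : |(1 - p) * t| = (1 - p) * |t| := by rw [abs_mul, abs_of_nonneg hq]
  have hfail := norm_exp_mul_I_sub_taylor_le (x := -(p * t))
    (hp_abs ▸ mul_le_one₀ h1 (abs_nonneg t) ht)
  have hsucc := norm_exp_mul_I_sub_taylor_le (x := (1 - p) * t)
    (hq_abs ▸ mul_le_one₀ (by linarith) (abs_nonneg t) ht)
  rw [hp_abs] at hfail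
  rw [hq_abs] at hsucc
  calc _ = ‖((1 - p : ℝ) : ℂ) * (Complex.exp ((-(p * t) : ℝ) * Complex.I) -
          (1 + (-(p * t) : ℝ) * Complex.I - (-(p * t) : ℝ) ^ 2 / 2)) +
        (p : ℂ) * (Complex.exp (((1 - p) * t : ℝ) * Complex.I) -
          (1 + ((1 - p) * t : ℝ) * Complex.I - ((1 - p) * t : ℝ) ^ 2 / 2))‖ := by
        congr 1
        push_cast
        ring
    _ ≤ (1 - p) * ((p * |t|) ^ 3 / 4) + p * (((1 - p) * |t|) ^ 3 / 4) := by
        refine norm_add_le_of_le ?_ ?_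
        · rw [norm_mul, Complex.norm_of_nonneg hq]
          gcongr
        · rw [norm_mul, Complex.norm_of_nonneg h0]
          gcongr
    _ = p * (1 - p) * |t| ^ 3 / 4 * (p ^ 2 + (1 - p) ^ 2) := by ring
    _ ≤ p * (1 - p) * |t| ^ 3 / 4 := mul_le_of_le_one_right (by positivity) (by nlinarith)

lemma abs_exp_neg_sub_taylor_le {v t : ℝ} (h0 : 0 ≤ v) (h1 : v ≤ 1) (ht : |t| ≤ 1) :
    |Real.exp (-(v * t ^ 2 / 2)) - (1 - v * t ^ 2 / 2)| ≤ v * |t| ^ 3 / 4 := by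
  have ht2 : t ^ 2 ≤ 1 := (sq_le_one_iff_abs_le_one t).2 ht
  have hsmall : |-(v * t ^ 2 / 2)| ≤ 1 := by
    rw [abs_neg, abs_of_nonneg (by positivity)]
    nlinarith [mul_le_one₀ h1 (sq_nonneg t) ht2]
  calc _ = |Real.exp (-(v * t ^ 2 / 2)) - 1 - -(v * t ^ 2 / 2)| := by ring_nf
    _ ≤ (-(v * t ^ 2 / 2)) ^ 2 := Real.abs_exp_sub_one_sub_id_le hsmall
    _ = v * v * |t| ^ 4 / 4 := by rw [Even.pow_abs (by decide)]; ring
    _ ≤ v * 1 * |t| ^ 3 / 4 := by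
        gcongr ?_ / 4
        exact mul_le_mul (by gcongr) (pow_le_pow_of_le_one (abs_nonneg t) ht (by norm_num))
          (by positivity) (by positivity)
    _ = v * |t| ^ 3 / 4 := by ring

lemma norm_centeredCharFun_X_add_C_sub_exp_le {r t : ℝ} (hr : 0 ≤ r) (ht : |t| ≤ 1) :
    ‖centeredCharFun (X + C r) t - (Real.exp (-(pgfVariance (X + C r) * t ^ 2 / 2)) : ℝ)‖ ≤
      pgfVariance (X + C r) * |t| ^ 3 := by
  have h0 : 0 ≤ (1 + r)⁻¹ := by positivity
  have h1 : (1 + r)⁻¹ ≤ 1 := inv_le_one_of_one_le₀ (by linarith)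
  rw [centeredCharFun_X_add_C hr, pgfVariance_X_add_C]
  generalize (1 + r)⁻¹ = p at *
  have hv0 : 0 ≤ p * (1 - p) := mul_nonneg h0 (sub_nonneg.2 h1)
  have hexp := abs_exp_neg_sub_taylor_le hv0 (by nlinarith) ht
  rw [abs_sub_comm, ← Real.norm_eq_abs, ← Complex.norm_real, Complex.ofReal_sub] at hexp
  refine (norm_sub_le_norm_sub_add_norm_sub _ _ _).trans
    ((add_le_add (norm_bernoulli_sub_taylor_le h0 h1 ht) hexp).trans ?_)
  nlinarith [mul_nonneg hv0 (pow_nonneg (abs_nonneg t) 3)]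

lemma norm_mul_sub_mul_le {R : Type*} [SeminormedRing R] {a b c d : R} (ha : ‖a‖ ≤ 1)
    (hd : ‖d‖ ≤ 1) : ‖a * b - c * d‖ ≤ ‖a - c‖ + ‖b - d‖ := by
  rw [show a * b - c * d = (a - c) * d + a * (b - d) by noncomm_ring]
  exact norm_add_le_of_le
    ((norm_mul_le _ _).trans (mul_le_of_le_one_right (norm_nonneg _) hd))
    ((norm_mul_le _ _).trans (mul_le_of_le_one_left (norm_nonneg _) ha))

theorem norm_centeredCharFun_sub_exp_le {F : ℝ[X]} (hF : F ∈ nonposRootSubmonoid) {t : ℝ}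
    (ht : |t| ≤ 1) :
    ‖centeredCharFun F t - (Real.exp (-(pgfVariance F * t ^ 2 / 2)) : ℝ)‖ ≤
      pgfVariance F * |t| ^ 3 := by
  induction hF using nonposRootSubmonoid.induction with
  | linear r hr => exact norm_centeredCharFun_X_add_C_sub_exp_le hr ht
  | one => simp [centeredCharFun_one, pgfVariance, pgfMean]
  | mul F G hF hG ihF ihG =>
    have hF1 := (nonposRootSubmonoid.eval_one_pos hF).ne'
    have hG1 := (nonposRootSubmonoid.eval_one_pos hG).ne'
    have hVG := nonposRootSubmonoid.pgfVariance_nonneg hG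
    have hgauss : ‖((Real.exp (-(pgfVariance G * t ^ 2 / 2)) : ℝ) : ℂ)‖ ≤ 1 := by
      rw [Complex.norm_of_nonneg (Real.exp_nonneg _), Real.exp_le_one_iff, neg_nonpos]
      positivity
    have hexp : Real.exp (-((pgfVariance F + pgfVariance G) * t ^ 2 / 2)) =
        Real.exp (-(pgfVariance F * t ^ 2 / 2)) * Real.exp (-(pgfVariance G * t ^ 2 / 2)) := by
      rw [← Real.exp_add]
      ring_nf
    rw [centeredCharFun_mul hF1 hG1, pgfVariance_mul hF1 hG1, hexp, Complex.ofReal_mul,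
      add_mul]
    exact (norm_mul_sub_mul_le (norm_centeredCharFun_le_one hF t) hgauss).trans (add_le_add ihF ihG)

/-- The law on `ℝ` giving the point `y i` the weight `p i`, for `i` in the finite set `s`. -/
noncomputable def finiteLaw {ι : Type*} (s : Finset ι) (p y : ι → ℝ) : Measure ℝ :=
  ∑ i ∈ s, ENNReal.ofReal (p i) • Measure.dirac (y i)

section finiteLaw

variable {ι : Type*} {s : Finset ι} {p : ι → ℝ} (y : ι → ℝ)

open Classical in
lemma finiteLaw_apply (hp : ∀ i ∈ s, 0 ≤ p i) {A : Set ℝ} (hA : MeasurableSet A) :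
    finiteLaw s p y A = ENNReal.ofReal (∑ i ∈ s with y i ∈ A, p i) := by
  rw [finiteLaw, Measure.finsetSum_apply, Finset.sum_filter, ENNReal.ofReal_sum_of_nonneg]
  · refine Finset.sum_congr rfl fun i _ => ?_
    rw [Measure.smul_apply, Measure.dirac_apply' _ hA, Set.indicator_apply]
    split_ifs <;> simp
  · intro i hi
    split_ifs
    exacts [hp i hi, le_rfl]

lemma isProbabilityMeasure_finiteLaw (hp : ∀ i ∈ s, 0 ≤ p i) (hsum : ∑ i ∈ s, p i = 1) :
    IsProbabilityMeasure (finiteLaw s p y) :=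
  ⟨by simp [finiteLaw_apply y hp MeasurableSet.univ, hsum]⟩

lemma charFun_finiteLaw (hp : ∀ i ∈ s, 0 ≤ p i) (t : ℝ) :
    charFun (finiteLaw s p y) t = ∑ i ∈ s, (p i : ℂ) * Complex.exp (t * y i * Complex.I) := by
  rw [charFun_apply_real, finiteLaw, integral_finsetSum_measure]
  · refine Finset.sum_congr rfl fun i hi => ?_
    rw [integral_smul_measure, integral_dirac, ENNReal.toReal_ofReal (hp i hi),
      Complex.real_smul]
  · exact fun i _ => (integrable_dirac (by simp)).smul_measure ENNReal.ofReal_ne_top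

end finiteLaw

theorem tendsto_sum_le_of_tendsto_charFun {ι : Type*} {s : ℕ → Finset ι} {p y : ℕ → ι → ℝ}
    (hp : ∀ n, ∀ i ∈ s n, 0 ≤ p n i) (hsum : ∀ n, ∑ i ∈ s n, p n i = 1)
    {μ : Measure ℝ} [IsProbabilityMeasure μ]
    (hchar : ∀ t : ℝ, Tendsto (fun n => ∑ i ∈ s n, (p n i : ℂ) *
      Complex.exp (t * y n i * Complex.I)) atTop (𝓝 (charFun μ t)))
    {x : ℝ} (hx : μ {x} = 0) :
    Tendsto (fun n => ∑ i ∈ s n with y n i ≤ x, p n i) atTop (𝓝 (μ.real (Set.Iic x))) := by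
  let law (n : ℕ) : ProbabilityMeasure ℝ :=
    ⟨finiteLaw (s n) (p n) (y n), isProbabilityMeasure_finiteLaw _ (hp n) (hsum n)⟩
  have hlaw : Tendsto law atTop (𝓝 ⟨μ, inferInstance⟩) :=
    ProbabilityMeasure.tendsto_of_tendsto_charFun fun t => by
      simpa only [law, ProbabilityMeasure.coe_mk, charFun_finiteLaw _ (hp _)] using hchar t
  have hIic := ProbabilityMeasure.tendsto_measure_of_null_frontier_of_tendsto' hlaw
    (E := Set.Iic x) (by simpa [frontier_Iic] using hx)
  refine ((ENNReal.tendsto_toReal (measure_ne_top μ _)).comp hIic).congr fun n => ?_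
  have hnonneg : 0 ≤ ∑ i ∈ s n with y n i ≤ x, p n i :=
    Finset.sum_nonneg fun i hi => hp n i (Finset.mem_filter.1 hi).1
  simp only [Function.comp_apply, law, ProbabilityMeasure.coe_mk]
  rw [finiteLaw_apply _ (hp n) measurableSet_Iic]
  simp only [Set.mem_Iic]
  convert ENNReal.toReal_ofReal hnonneg

lemma gaussianReal_real_Iic (x : ℝ) :
    (ProbabilityTheory.gaussianReal 0 1).real (Set.Iic x) =
      (Real.sqrt (2 * Real.pi))⁻¹ * ∫ t in Set.Iic x, Real.exp (-t ^ 2 / 2) := by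
  rw [measureReal_def, ProbabilityTheory.gaussianReal_apply_eq_integral _ one_ne_zero,
    ENNReal.toReal_ofReal (integral_nonneg (ProbabilityTheory.gaussianPDFReal_nonneg _ _)),
    ← integral_const_mul]
  simp [ProbabilityTheory.gaussianPDFReal]

lemma tendsto_centeredCharFun_div_sqrt_pgfVariance {F : ℕ → ℝ[X]}
    (hF : ∀ n, F n ∈ nonposRootSubmonoid) (hV : Tendsto (fun n => pgfVariance (F n)) atTop atTop)
    (t : ℝ) :
    Tendsto (fun n => centeredCharFun (F n) (t / √(pgfVariance (F n)))) atTop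
      (𝓝 (charFun (ProbabilityTheory.gaussianReal 0 1) t)) := by
  have hlim : charFun (ProbabilityTheory.gaussianReal 0 1) t = (Real.exp (-(t ^ 2 / 2)) : ℝ) := by
    rw [ProbabilityTheory.charFun_gaussianReal]
    push_cast
    simp
  have hsqrt : Tendsto (fun n => √(pgfVariance (F n))) atTop atTop :=
    Real.tendsto_sqrt_atTop.comp hV
  have hbound := hsqrt.const_div_atTop (|t| ^ 3)
  rw [hlim, tendsto_iff_norm_sub_tendsto_zero]
  refine squeeze_zero' (Eventually.of_forall fun _ => norm_nonneg _) ?_ hbound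
  filter_upwards [hsqrt.eventually_ge_atTop |t|, hsqrt.eventually_gt_atTop 0] with n hle hpos
  have hsq : √(pgfVariance (F n)) ^ 2 = pgfVariance (F n) :=
    Real.sq_sqrt (Real.sqrt_pos.1 hpos).le
  have habs : |t / √(pgfVariance (F n))| = |t| / √(pgfVariance (F n)) := by
    rw [abs_div, abs_of_pos hpos]
  have hexp : pgfVariance (F n) * (t / √(pgfVariance (F n))) ^ 2 = t ^ 2 := by
    rw [div_pow, hsq, mul_div_cancel₀ _ (Real.sqrt_pos.1 hpos).ne']
  have hrate : pgfVariance (F n) * (|t| / √(pgfVariance (F n))) ^ 3 =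
      |t| ^ 3 / √(pgfVariance (F n)) := by
    nth_rewrite 1 [← hsq]
    field_simp
  have := norm_centeredCharFun_sub_exp_le (hF n) (habs ▸ div_le_one_of_le₀ hle hpos.le)
  rwa [habs, hexp, hrate] at this

/-- **Harper's theorem**. -/
theorem tendsto_sum_coeff_le_of_pgfVariance_tendsto_atTop {F : ℕ → ℝ[X]} {N : ℕ → ℕ}
    (hF : ∀ n, F n ∈ nonposRootSubmonoid) (hN : ∀ n, (F n).natDegree ≤ N n)
    (hV : Tendsto (fun n => pgfVariance (F n)) atTop atTop) (x : ℝ) :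
    Tendsto (fun n => ∑ k ∈ Finset.range (N n + 1) with
        ((k : ℕ) : ℝ) ≤ pgfMean (F n) + x * √(pgfVariance (F n)), (F n).coeff k / (F n).eval 1)
      atTop (𝓝 ((Real.sqrt (2 * Real.pi))⁻¹ * ∫ t in Set.Iic x, Real.exp (-t ^ 2 / 2))) := by
  have := ProbabilityTheory.nullSingletonClass_gaussianReal (μ := 0) one_ne_zero
  rw [← gaussianReal_real_Iic]
  refine (tendsto_sum_le_of_tendsto_charFun
    (s := fun n => Finset.range (N n + 1))
    (p := fun n k => (F n).coeff k / (F n).eval 1)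
    (y := fun n k => (k - pgfMean (F n)) / √(pgfVariance (F n)))
    (fun n k _ => ?_) (fun n => ?_) (fun t => ?_) (measure_singleton x)).congr' ?_
  · exact div_nonneg (nonposRootSubmonoid.coeff_nonneg (hF n) k)
      (nonposRootSubmonoid.eval_one_pos (hF n)).le
  · exact sum_coeff_div_eval_one (nonposRootSubmonoid.eval_one_pos (hF n)).ne' (hN n)
  · refine (tendsto_centeredCharFun_div_sqrt_pgfVariance hF hV t).congr fun n => ?_
    rw [centeredCharFun_eq_sum (hN n)]
    congr! 5
    push_cast
    ring
  · filter_upwards [hV.eventually_gt_atTop 0] with n hn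
    have hpos : 0 < √(pgfVariance (F n)) := Real.sqrt_pos.2 hn
    simp only [div_le_iff₀ hpos, sub_le_iff_le_add']

/-- The polynomial `∑ k, T k • X ^ k` with the row `n` of the array `T (n + 1) k =
T n (k - 1) + (m k + c) T n k` as coefficients: an `r`-Dowling polynomial (coefficients: the
`r`-Whitney numbers of the second kind), a Touchard polynomial for `m = 1` and `c = 0`. -/
noncomputable def dowlingPoly (m c : ℝ) : ℕ → ℝ[X]
  | 0 => 1
  | n + 1 => (X + C c) * dowlingPoly m c n + C m * (X * derivative (dowlingPoly m c n))

/-- The ratio of the values at `1` of consecutive polynomials `dowlingPoly m c n`. -/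
noncomputable def dowlingRatio (m c : ℝ) (n : ℕ) : ℝ :=
  (dowlingPoly m c (n + 1)).eval 1 / (dowlingPoly m c n).eval 1

lemma coeff_dowlingPoly_succ_zero (m c : ℝ) (n : ℕ) :
    (dowlingPoly m c (n + 1)).coeff 0 = c * (dowlingPoly m c n).coeff 0 := by
  simp [dowlingPoly, add_mul]

lemma coeff_dowlingPoly_succ_succ (m c : ℝ) (n k : ℕ) :
    (dowlingPoly m c (n + 1)).coeff (k + 1) = (dowlingPoly m c n).coeff k +
      (m * (k + 1 : ℕ) + c) * (dowlingPoly m c n).coeff (k + 1) := by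
  rw [dowlingPoly, coeff_add, add_mul, coeff_add, coeff_X_mul, coeff_C_mul, coeff_C_mul,
    coeff_X_mul_derivative]
  ring

lemma natDegree_dowlingPoly_le (m c : ℝ) (n : ℕ) : (dowlingPoly m c n).natDegree ≤ n := by
  induction n with
  | zero => simp [dowlingPoly]
  | succ n ih =>
    refine natDegree_add_le_of_degree_le
      ((natDegree_mul_le_of_le (natDegree_X_add_C c).le ih).trans (by omega)) ?_
    exact (natDegree_C_mul_le _ _).trans ((natDegree_X_mul_derivative_le _).trans (by omega))

section nonneg

variable {m c : ℝ} (hm : 0 ≤ m) (hc : 0 ≤ c) (n : ℕ)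
include hm hc

theorem dowlingPoly_mem_nonposRootSubmonoid : dowlingPoly m c n ∈ nonposRootSubmonoid := by
  induction n with
  | zero => exact one_mem _
  | succ n ih => exact nonposRootSubmonoid.X_add_C_mul_add_mem ih hm hc

lemma eval_one_dowlingPoly_pos : 0 < (dowlingPoly m c n).eval 1 :=
  nonposRootSubmonoid.eval_one_pos (dowlingPoly_mem_nonposRootSubmonoid hm hc n)

lemma dowlingRatio_pos : 0 < dowlingRatio m c n :=
  div_pos (eval_one_dowlingPoly_pos hm hc _) (eval_one_dowlingPoly_pos hm hc _)

lemma eval_one_dowlingPoly_succ : (dowlingPoly m c (n + 1)).eval 1 =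
    dowlingRatio m c n * (dowlingPoly m c n).eval 1 :=
  (div_mul_cancel₀ _ (eval_one_dowlingPoly_pos hm hc n).ne').symm

lemma eval_one_dowlingPoly_add_two : (dowlingPoly m c (n + 2)).eval 1 =
    (dowlingRatio m c n ^ 2 + m + m ^ 2 * pgfVariance (dowlingPoly m c n)) *
      (dowlingPoly m c n).eval 1 := by
  have hD := (eval_one_dowlingPoly_pos hm hc n).ne'
  simp only [dowlingRatio, pgfVariance, pgfMean, dowlingPoly, derivative_add, derivative_mul,
    derivative_X, derivative_C, eval_add, eval_mul, eval_X, eval_C, eval_one, eval_zero]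
  field_simp
  ring

end nonneg

lemma hasSum_coeff_polynomial_mul {R : Type*} [CommRing R] [TopologicalSpace R]
    [IsTopologicalRing R] {φ : PowerSeries R} {a : R}
    (hφ : HasSum (fun j => PowerSeries.coeff j φ) a) (p : R[X]) :
    HasSum (fun j => PowerSeries.coeff j ((p : PowerSeries R) * φ)) (p.eval 1 * a) := by
  induction p using Polynomial.induction_on' with
  | add p q hp hq =>
    simpa only [coe_add, add_mul, map_add, eval_add] using hp.add hq
  | monomial k b =>
    have hshift : HasSum (fun j => PowerSeries.coeff j (PowerSeries.X ^ k * φ)) a := by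
      rw [← hasSum_nat_add_iff' k, Finset.sum_eq_zero, sub_zero]
      · simpa only [PowerSeries.coeff_X_pow_mul', le_add_iff_nonneg_left, zero_le, if_true,
          Nat.add_sub_cancel] using hφ
      · intro j hj
        rw [PowerSeries.coeff_X_pow_mul', if_neg (by simpa using hj)]
    simpa [← C_mul_X_pow_eq_monomial, mul_assoc] using hshift.mul_left b

/-- The weights `(m j + c) ^ n · m⁻ʲ / j!` of Dobinski's formula for `dowlingPoly m c n`. -/
noncomputable def dobinskiWeight (m c : ℝ) (n j : ℕ) : ℝ :=
  (m * j + c) ^ n * (m⁻¹ ^ j / j.factorial)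

lemma dobinskiWeight_nonneg {m c : ℝ} (hm : 0 ≤ m) (hc : 0 ≤ c) (n j : ℕ) :
    0 ≤ dobinskiWeight m c n j := by
  rw [dobinskiWeight]
  positivity

lemma dobinskiWeight_succ (m c : ℝ) (n j : ℕ) :
    dobinskiWeight m c (n + 1) j = (m * j + c) * dobinskiWeight m c n j := by
  rw [dobinskiWeight, dobinskiWeight, pow_succ']
  ring

lemma mk_dobinskiWeight_succ (m c : ℝ) (n : ℕ) :
    PowerSeries.mk (dobinskiWeight m c (n + 1)) =
      PowerSeries.C c * PowerSeries.mk (dobinskiWeight m c n) + PowerSeries.C m *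
        (PowerSeries.X * PowerSeries.derivative ℝ (PowerSeries.mk (dobinskiWeight m c n))) := by
  ext j
  cases j with
  | zero => simp [dobinskiWeight_succ]
  | succ j =>
    simp only [PowerSeries.coeff_mk, dobinskiWeight_succ, map_add, PowerSeries.coeff_C_mul,
      PowerSeries.coeff_succ_X_mul, PowerSeries.coeff_derivative]
    push_cast
    ring

lemma C_mul_derivative_mk_dobinskiWeight_zero {m : ℝ} (hm : m ≠ 0) (c : ℝ) :
    PowerSeries.C m * PowerSeries.derivative ℝ (PowerSeries.mk (dobinskiWeight m c 0)) =
      PowerSeries.mk (dobinskiWeight m c 0) := by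
  ext j
  simp only [PowerSeries.coeff_C_mul, PowerSeries.coeff_derivative, PowerSeries.coeff_mk,
    dobinskiWeight, pow_zero, pow_succ, Nat.factorial_succ]
  push_cast
  field_simp

lemma dowlingPoly_mul_mk_dobinskiWeight_zero {m : ℝ} (hm : m ≠ 0) (c : ℝ) (n : ℕ) :
    (dowlingPoly m c n : PowerSeries ℝ) * PowerSeries.mk (dobinskiWeight m c 0) =
      PowerSeries.mk (dobinskiWeight m c n) := by
  induction n with
  | zero => simp [dowlingPoly]
  | succ n ih =>
    rw [mk_dobinskiWeight_succ, ← ih, Derivation.leibniz, PowerSeries.derivative_coe, dowlingPoly]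
    simp only [coe_add, coe_mul, coe_X, coe_C, smul_eq_mul]
    linear_combination -(PowerSeries.X * (dowlingPoly m c n : PowerSeries ℝ)) *
      C_mul_derivative_mk_dobinskiWeight_zero hm c

theorem hasSum_dobinskiWeight {m : ℝ} (hm : m ≠ 0) (c : ℝ) (n : ℕ) :
    HasSum (dobinskiWeight m c n) ((dowlingPoly m c n).eval 1 * Real.exp m⁻¹) := by
  have hexp : HasSum (fun j => PowerSeries.coeff j (PowerSeries.mk (dobinskiWeight m c 0)))
      (Real.exp m⁻¹) := by
    simp only [PowerSeries.coeff_mk, dobinskiWeight, pow_zero, one_mul, Real.exp_eq_exp_ℝ]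
    exact NormedSpace.expSeries_div_hasSum_exp m⁻¹
  simpa only [dowlingPoly_mul_mk_dobinskiWeight_zero hm, PowerSeries.coeff_mk] using
    hasSum_coeff_polynomial_mul hexp (dowlingPoly m c n)

/-- The ratio `w (j - 1) / w j` of consecutive Dobinski weights `w = dobinskiWeight m c n`, which
vanishes at `j = 0`. -/
noncomputable def dobinskiScore (m c : ℝ) (n j : ℕ) : ℝ :=
  m * j * ((m * j + c - m) / (m * j + c)) ^ n

section

variable {m c : ℝ} (hm : 0 < m) (hc : 0 ≤ c) (n : ℕ)
include hm hc

lemma dobinskiScore_mul_dobinskiWeight_succ (j : ℕ) :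
    dobinskiScore m c n (j + 1) * dobinskiWeight m c n (j + 1) = dobinskiWeight m c n j := by
  have hx : m * (j + 1) + c ≠ 0 := by positivity
  rw [dobinskiScore, dobinskiWeight, dobinskiWeight, Nat.factorial_succ, pow_succ]
  push_cast
  rw [show m * (j + 1) + c - m = m * j + c by ring]
  field_simp
  rw [← mul_pow, div_mul_cancel₀ _ hx]

-- A discrete integration by parts.
lemma hasSum_mul_dobinskiScore_iff {g : ℕ → ℝ} {a : ℝ} :
    HasSum (fun j => g j * dobinskiScore m c n j * dobinskiWeight m c n j) a ↔
      HasSum (fun j => g (j + 1) * dobinskiWeight m c n j) a := by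
  rw [← hasSum_nat_add_iff' 1]
  simp only [Finset.range_one, Finset.sum_singleton, mul_assoc,
    dobinskiScore_mul_dobinskiWeight_succ hm hc]
  simp [dobinskiScore]

lemma hasSum_dobinskiScore_mul_dobinskiWeight :
    HasSum (fun j => dobinskiScore m c n j * dobinskiWeight m c n j)
      ((dowlingPoly m c n).eval 1 * Real.exp m⁻¹) := by
  have hshift := (hasSum_mul_dobinskiScore_iff hm hc n (g := fun _ => 1)).2
    (by simpa only [one_mul] using hasSum_dobinskiWeight hm.ne' c n)
  simpa only [one_mul] using hshift

lemma dobinskiScore_nonneg (j : ℕ) : 0 ≤ dobinskiScore m c n j := by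
  cases j with
  | zero => simp [dobinskiScore]
  | succ j =>
    have : 0 ≤ m * ((j + 1 : ℕ) : ℝ) + c - m := by
      push_cast
      nlinarith [j.cast_nonneg (α := ℝ)]
    rw [dobinskiScore]
    positivity

lemma dobinskiNode_le {L : ℝ} (hL : 0 < L) (j : ℕ) :
    m * j + c ≤ c + m + m * n / L + Real.exp L * dobinskiScore m c n j := by
  rcases le_or_gt (m * j + c) (c + m + m * n / L) with hle | hlt
  · exact hle.trans (le_add_of_nonneg_right
      (mul_nonneg (Real.exp_nonneg _) (dobinskiScore_nonneg hm hc n j)))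
  have hLn : 0 ≤ m * n / L := by positivity
  set x := m * j + c with hx
  have hxm : 0 < x - m := by linarith
  have hpow : (x / (x - m)) ^ n ≤ Real.exp L := by
    have hratio : x / (x - m) ≤ Real.exp (m / (x - m)) := by
      refine le_trans (le_of_eq ?_) (Real.add_one_le_exp _)
      field_simp
      ring
    have hexp : n * (m / (x - m)) ≤ L := by
      rw [← mul_div_assoc, div_le_iff₀ hxm, mul_comm, ← div_le_iff₀' hL]
      linarith
    calc (x / (x - m)) ^ n ≤ Real.exp (m / (x - m)) ^ n :=
          pow_le_pow_left₀ (div_nonneg (by linarith) hxm.le) hratio n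
      _ = Real.exp (n * (m / (x - m))) := (Real.exp_nat_mul _ n).symm
      _ ≤ Real.exp L := Real.exp_le_exp.2 hexp
  have hcancel : (x / (x - m)) ^ n * ((x - m) / x) ^ n = 1 := by
    rw [← mul_pow, div_mul_div_cancel₀ hxm.ne', div_self (by linarith), one_pow]
  calc x = c + m * j * ((x / (x - m)) ^ n * ((x - m) / x) ^ n) := by rw [hcancel, hx]; ring
    _ ≤ c + m + m * n / L + Real.exp L * (m * j * ((x - m) / x) ^ n) := by
        have : 0 ≤ m * j * ((x - m) / x) ^ n := dobinskiScore_nonneg hm hc n j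
        nlinarith [mul_le_mul_of_nonneg_right hpow this]

lemma dowlingRatio_le {L : ℝ} (hL : 0 < L) :
    dowlingRatio m c n ≤ c + m + m * n / L + Real.exp L := by
  have hsum := hasSum_dobinskiWeight hm.ne' c n
  have hscore := hasSum_dobinskiScore_mul_dobinskiWeight hm hc n
  have hle := hasSum_le (fun j => ?_) (hasSum_dobinskiWeight hm.ne' c (n + 1))
    ((hsum.mul_left (c + m + m * n / L)).add (hscore.mul_left (Real.exp L)))
  · rw [eval_one_dowlingPoly_succ hm.le hc, ← add_mul, mul_assoc] at hle
    exact le_of_mul_le_mul_right hle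
      (mul_pos (eval_one_dowlingPoly_pos hm.le hc n) (Real.exp_pos _))
  · rw [dobinskiWeight_succ, ← mul_assoc, ← add_mul]
    exact mul_le_mul_of_nonneg_right (dobinskiNode_le hm hc n hL j)
      (dobinskiWeight_nonneg hm.le hc n j)

end

lemma dowlingRatio_isLittleO {m c : ℝ} (hm : 0 < m) (hc : 0 ≤ c) :
    dowlingRatio m c =o[atTop] fun n : ℕ => (n : ℝ) := by
  refine Asymptotics.isLittleO_iff.2 fun ε hε => ?_
  have hL : 0 < 2 * m / ε := by positivity
  filter_upwards [tendsto_natCast_atTop_atTop.eventually_ge_atTop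
    ((c + m + Real.exp (2 * m / ε)) / (ε / 2))] with n hn
  have hle := dowlingRatio_le hm hc n hL
  have hlin : m * n / (2 * m / ε) = ε / 2 * n := by field_simp
  rw [div_le_iff₀ (by positivity)] at hn
  rw [Real.norm_of_nonneg (dowlingRatio_pos hm.le hc n).le, Real.norm_natCast]
  linarith

lemma hasSum_cov_le {ι : Type*} {w f g h : ι → ℝ} {s W F G H P S : ℝ} (hw : ∀ i, 0 ≤ w i)
    (hW : HasSum w W) (hF : HasSum (fun i => f i * w i) F) (hG : HasSum (fun i => g i * w i) G)
    (hH : HasSum (fun i => h i * w i) H) (hP : HasSum (fun i => f i * h i * w i) P)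
    (hS : HasSum (fun i => g i ^ 2 * w i) S)
    (hle : ∀ i j, (f i - f j) * (h i - h j) ≤ s * (g i - g j) ^ 2) :
    W * P - F * H ≤ s * (W * S - G ^ 2) := by
  have hinner (j : ι) : P - f j * H - h j * F + f j * h j * W ≤
      s * (S - 2 * g j * G + g j ^ 2 * W) := by
    refine hasSum_le (fun i => ?_)
      (((hP.sub (hH.mul_left (f j))).sub (hF.mul_left (h j))).add (hW.mul_left (f j * h j)))
      (((hS.sub (hG.mul_left (2 * g j))).add (hW.mul_left (g j ^ 2))).mul_left s)
    linarith [mul_le_mul_of_nonneg_right (hle i j) (hw i)]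
  have houter := hasSum_le (fun j => ?_)
    (((((hW.mul_left P).sub (hF.mul_left H)).sub (hH.mul_left F)).add (hP.mul_left W)))
    (((((hW.mul_left S).sub (hG.mul_left (2 * G))).add (hS.mul_left W))).mul_left s)
  · linarith
  · linarith [mul_le_mul_of_nonneg_right (hinner j) (hw j)]

lemma mul_one_sub_pow_mul_le_two {u : ℝ} (hu₀ : 0 ≤ u) (hu₁ : u ≤ 1) (n : ℕ) :
    n * u * (1 - u) ^ n * (1 + n * u) ≤ 2 := by
  have hpow : (1 - u) ^ n ≤ Real.exp (-(n * u)) := by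
    rw [← mul_neg, Real.exp_nat_mul]
    exact pow_le_pow_left₀ (sub_nonneg.2 hu₁) (Real.one_sub_le_exp_neg u) n
  have hquad : n * u * (1 + n * u) ≤ 2 * Real.exp (n * u) := by
    nlinarith [Real.quadratic_le_exp_of_nonneg (mul_nonneg n.cast_nonneg hu₀)]
  calc n * u * (1 - u) ^ n * (1 + n * u) = n * u * (1 + n * u) * (1 - u) ^ n := by ring
    _ ≤ 2 * Real.exp (n * u) * Real.exp (-(n * u)) := by gcongr
    _ = 2 := by rw [mul_assoc, ← Real.exp_add, add_neg_cancel, Real.exp_zero, mul_one]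

lemma pow_succ_sub_pow_succ_le {R : Type*} [CommRing R] [LinearOrder R] [IsOrderedRing R] {a b : R}
    (hb : 0 ≤ b) (hba : b ≤ a) (n : ℕ) :
    a ^ (n + 1) - b ^ (n + 1) ≤ (a - b) * ((n + 1) * a ^ n) := by
  have hle := (le_abs_self _).trans (abs_pow_sub_pow_le a b (n + 1))
  rwa [abs_of_nonneg (sub_nonneg.2 hba), abs_of_nonneg hb, abs_of_nonneg (hb.trans hba),
    max_eq_left hba, Nat.add_sub_cancel, Nat.cast_add_one, mul_assoc] at hle

section

variable {m c : ℝ} (hm : 0 < m) (hc : 0 ≤ c) (n : ℕ)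
include hm hc

lemma dobinskiScore_succ_sub_le {i j : ℕ} (hji : j ≤ i) (hj : 0 < j) :
    dobinskiScore m c (n + 1) i - dobinskiScore m c (n + 1) j ≤
      m * (i - j) * (1 - m / (m * i + c)) ^ n * (1 + n * (m / (m * i + c))) := by
  have hj₁ : (1 : ℝ) ≤ j := by exact_mod_cast hj
  have hij : (j : ℝ) ≤ i := by exact_mod_cast hji
  set x := m * i + c with hx
  set y := m * j + c with hy
  have hmy : m ≤ y := by nlinarith
  have hyx : y ≤ x := by simp only [hx, hy]; gcongr
  have hy₀ : 0 < y := hm.trans_le hmy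
  have hx₀ : 0 < x := hy₀.trans_le hyx
  have hb : 0 ≤ (y - m) / y := div_nonneg (sub_nonneg.2 hmy) hy₀.le
  have hba : (y - m) / y ≤ (x - m) / x := by
    rw [div_le_div_iff₀ hy₀ hx₀]
    nlinarith
  have hbase : m * j * ((x - m) / x - (y - m) / y) ≤ m * (i - j) * (m / x) := by
    have : (x - m) / x - (y - m) / y = m * (i - j) * (m / x) / y := by
      field_simp
      ring
    rw [this, mul_div_assoc', div_le_iff₀ hy₀, mul_comm]
    refine mul_le_mul_of_nonneg_left (by linarith) ?_
    exact mul_nonneg (mul_nonneg hm.le (sub_nonneg.2 hij)) (div_nonneg hm.le hx₀.le)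
  calc dobinskiScore m c (n + 1) i - dobinskiScore m c (n + 1) j
      = m * (i - j) * ((x - m) / x) ^ (n + 1) +
        m * j * (((x - m) / x) ^ (n + 1) - ((y - m) / y) ^ (n + 1)) := by
        rw [dobinskiScore, dobinskiScore]
        ring
    _ ≤ m * (i - j) * ((x - m) / x) ^ (n + 1) +
        m * (i - j) * (m / x) * ((n + 1) * ((x - m) / x) ^ n) := by
        have hpow_nonneg : 0 ≤ (n + 1) * ((x - m) / x) ^ n :=
          mul_nonneg (by positivity) (pow_nonneg (hb.trans hba) n)
        linarith [mul_le_mul_of_nonneg_left (pow_succ_sub_pow_succ_le hb hba n)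
          (mul_nonneg hm.le j.cast_nonneg), mul_le_mul_of_nonneg_right hbase hpow_nonneg]
    _ = m * (i - j) * (1 - m / x) ^ n * (1 + n * (m / x)) := by
        rw [sub_div, div_self hx₀.ne', pow_succ]
        ring

lemma mul_dobinskiScore_sub_le {i j : ℕ} (hji : j ≤ i) :
    n * (dobinskiScore m c (n + 1) i - dobinskiScore m c (n + 1) j) ≤
      2 * (m * i + c) * (i - j) := by
  rcases hji.eq_or_lt with rfl | hlt
  · simp
  have hij : (0 : ℝ) ≤ i - j := sub_nonneg.2 (by exact_mod_cast hji)
  have hi : (1 : ℝ) ≤ i := by exact_mod_cast Nat.one_le_of_lt hlt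
  have hmx : m ≤ m * i + c := by nlinarith
  have hx : 0 < m * i + c := hm.trans_le hmx
  have hu : m / (m * i + c) ≤ 1 := (div_le_one hx).2 hmx
  have hsub : dobinskiScore m c (n + 1) i - dobinskiScore m c (n + 1) j ≤
      m * (i - j) * (1 - m / (m * i + c)) ^ n * (1 + n * (m / (m * i + c))) := by
    rcases Nat.eq_zero_or_pos j with rfl | hj
    · have : 0 ≤ (1 - m / (m * i + c)) ^ n := pow_nonneg (sub_nonneg.2 hu) n
      have hscore : dobinskiScore m c (n + 1) i =
          m * i * (1 - m / (m * i + c)) ^ n * (1 - m / (m * i + c)) := by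
        rw [dobinskiScore, sub_div, div_self hx.ne', pow_succ, ← mul_assoc]
      have hzero : dobinskiScore m c (n + 1) 0 = 0 := by simp [dobinskiScore]
      rw [hscore, hzero, Nat.cast_zero, sub_zero, sub_zero]
      gcongr
      exact (sub_le_self _ (by positivity)).trans (le_add_of_nonneg_right (by positivity))
    · exact dobinskiScore_succ_sub_le hm hc n hji hj
  calc n * (dobinskiScore m c (n + 1) i - dobinskiScore m c (n + 1) j)
      ≤ n * (m * (i - j) * (1 - m / (m * i + c)) ^ n * (1 + n * (m / (m * i + c)))) := by
        gcongr
    _ = (m * i + c) * (i - j) *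
        (n * (m / (m * i + c)) * (1 - m / (m * i + c)) ^ n * (1 + n * (m / (m * i + c)))) := by
        field_simp
    _ ≤ (m * i + c) * (i - j) * 2 := by
        gcongr
        exact mul_one_sub_pow_mul_le_two (by positivity) hu n
    _ = 2 * (m * i + c) * (i - j) := by ring

lemma neg_inv_sub_mul_dobinskiScore_sub_le {ρ : ℝ} (hρ : 0 < ρ) (hn : 0 < n) (i j : ℕ) :
    (-(m * i + c + ρ)⁻¹ - -(m * j + c + ρ)⁻¹) *
        (dobinskiScore m c (n + 1) i - dobinskiScore m c (n + 1) j) ≤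
      2 / (m * n * ρ) * (m * i + c - (m * j + c)) ^ 2 := by
  wlog hji : j ≤ i generalizing i j
  · linarith [this j i (le_of_not_ge hji)]
  have hn' : (0 : ℝ) < n := by exact_mod_cast hn
  have hij : (0 : ℝ) ≤ i - j := sub_nonneg.2 (by exact_mod_cast hji)
  have : 0 ≤ m * i + c := by positivity
  have hy : ρ ≤ m * j + c + ρ := by
    have : 0 ≤ m * j + c := by positivity
    linarith
  have hscore : dobinskiScore m c (n + 1) i - dobinskiScore m c (n + 1) j ≤
      2 * (m * i + c + ρ) * (i - j) / n := by
    rw [le_div_iff₀' hn']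
    refine (mul_dobinskiScore_sub_le hm hc n hji).trans ?_
    nlinarith
  calc (-(m * i + c + ρ)⁻¹ - -(m * j + c + ρ)⁻¹) *
        (dobinskiScore m c (n + 1) i - dobinskiScore m c (n + 1) j)
      = m * (i - j) / ((m * i + c + ρ) * (m * j + c + ρ)) *
        (dobinskiScore m c (n + 1) i - dobinskiScore m c (n + 1) j) := by
        congr 1
        have := (hρ.trans_le hy).ne'
        field_simp
        ring
    _ ≤ m * (i - j) / ((m * i + c + ρ) * (m * j + c + ρ)) *
        (2 * (m * i + c + ρ) * (i - j) / n) := by gcongr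
    _ ≤ m * (i - j) / ((m * i + c + ρ) * ρ) * (2 * (m * i + c + ρ) * (i - j) / n) := by
        gcongr
    _ = 2 / (m * n * ρ) * (m * i + c - (m * j + c)) ^ 2 := by
        field_simp
        ring

end

-- The tangent line of `z ↦ z⁻²` at `a`.
lemma three_mul_sub_two_mul_div_pow_le_inv_sq {K : Type*} [Field K] [LinearOrder K]
    [IsStrictOrderedRing K] {a z : K} (ha : 0 < a) (hz : 0 < z) :
    (3 * a - 2 * z) / a ^ 3 ≤ (z ^ 2)⁻¹ := by
  rw [← one_div, div_le_div_iff₀ (by positivity) (by positivity)]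
  nlinarith [mul_nonneg (sq_nonneg (a - z)) (by positivity : 0 ≤ a + 2 * z)]

section

variable {m c : ℝ} (hm : 0 < m) (hc : 0 ≤ c) (n : ℕ)
include hm hc

lemma summable_neg_inv_mul_dobinskiWeight {ρ : ℝ} (hρ : 0 < ρ) :
    Summable fun j : ℕ => -(m * j + c + ρ)⁻¹ * dobinskiWeight m c n j := by
  refine Summable.of_norm_bounded
    ((hasSum_dobinskiWeight hm.ne' c n).summable.mul_left ρ⁻¹) fun j => ?_
  have hx : 0 ≤ m * j + c := by positivity
  rw [norm_mul, norm_neg, Real.norm_of_nonneg (by positivity),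
    Real.norm_of_nonneg (dobinskiWeight_nonneg hm.le hc n j)]
  exact mul_le_mul_of_nonneg_right (inv_anti₀ hρ (by linarith))
    (dobinskiWeight_nonneg hm.le hc n j)

lemma le_sub_of_hasSum_neg_inv_mul_dobinskiWeight {ρ F P : ℝ} (hρ : 0 < ρ)
    (hF : HasSum (fun j : ℕ => -(m * j + c + ρ)⁻¹ * dobinskiWeight m c n j) F)
    (hP : HasSum (fun j : ℕ => -(m * (j + 1 : ℕ) + c + ρ)⁻¹ * dobinskiWeight m c n j) P) :
    m / (dowlingRatio m c n + m + ρ) ^ 2 * ((dowlingPoly m c n).eval 1 * Real.exp m⁻¹) ≤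
      P - F := by
  have hR := dowlingRatio_pos hm.le hc n
  set a := dowlingRatio m c n + m + ρ with ha
  have ha₀ : 0 < a := by positivity
  have hlin := ((hasSum_dobinskiWeight hm.ne' c n).mul_left (m * (3 * a - 2 * (m + ρ)) / a ^ 3)).sub
    ((hasSum_dobinskiWeight hm.ne' c (n + 1)).mul_left (2 * m / a ^ 3))
  refine le_trans (le_of_eq ?_) (hasSum_le (fun j => ?_) hlin (hP.sub hF))
  · rw [eval_one_dowlingPoly_succ hm.le hc]
    field_simp
    rw [ha]
    ring
  · have : 0 ≤ m * j + c := by positivity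
    have htangent := three_mul_sub_two_mul_div_pow_le_inv_sq ha₀
      (by positivity : 0 < m * j + c + m + ρ)
    have hstep : m * ((m * j + c + m + ρ) ^ 2)⁻¹ ≤
        -(m * (j + 1 : ℕ) + c + ρ)⁻¹ - -(m * j + c + ρ)⁻¹ := by
      have : -(m * (j + 1 : ℕ) + c + ρ)⁻¹ - -(m * j + c + ρ)⁻¹ =
          m * ((m * j + c + ρ) * (m * j + c + m + ρ))⁻¹ := by
        push_cast
        field_simp
        ring
      rw [this, pow_two]
      refine mul_le_mul_of_nonneg_left (inv_anti₀ (by positivity) ?_) hm.le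
      exact mul_le_mul_of_nonneg_right (by linarith) (by positivity)
    rw [dobinskiWeight_succ, ← sub_mul]
    calc _ = m * ((3 * a - 2 * (m * j + c + m + ρ)) / a ^ 3) * dobinskiWeight m c n j := by ring
      _ ≤ _ := mul_le_mul_of_nonneg_right
        ((mul_le_mul_of_nonneg_left htangent hm.le).trans hstep)
        (dobinskiWeight_nonneg hm.le hc n j)

lemma hasSum_dobinskiNode_mul_dobinskiWeight :
    HasSum (fun j : ℕ => (m * j + c) * dobinskiWeight m c n j)
      (dowlingRatio m c n * ((dowlingPoly m c n).eval 1 * Real.exp m⁻¹)) := by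
  rw [← mul_assoc, ← eval_one_dowlingPoly_succ hm.le hc]
  exact (hasSum_dobinskiWeight hm.ne' c (n + 1)).congr_fun fun j =>
    (dobinskiWeight_succ m c n j).symm

lemma hasSum_dobinskiNode_sq_mul_dobinskiWeight :
    HasSum (fun j : ℕ => (m * j + c) ^ 2 * dobinskiWeight m c n j)
      ((dowlingRatio m c n ^ 2 + m + m ^ 2 * pgfVariance (dowlingPoly m c n)) *
        ((dowlingPoly m c n).eval 1 * Real.exp m⁻¹)) := by
  rw [← mul_assoc, ← eval_one_dowlingPoly_add_two hm.le hc]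
  exact (hasSum_dobinskiWeight hm.ne' c (n + 2)).congr_fun fun j => by
    rw [dobinskiWeight_succ, dobinskiWeight_succ, ← mul_assoc, pow_two]

theorem mul_le_mul_one_add_pgfVariance_dowlingPoly :
    m * n ≤ 8 * (dowlingRatio m c (n + 1) + m) *
      (1 + m * pgfVariance (dowlingPoly m c (n + 1))) := by
  have hR := dowlingRatio_pos hm.le hc (n + 1)
  have hV := nonposRootSubmonoid.pgfVariance_nonneg
    (dowlingPoly_mem_nonposRootSubmonoid hm.le hc (n + 1))
  rcases Nat.eq_zero_or_pos n with rfl | hn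
  · rw [Nat.cast_zero, mul_zero]
    positivity
  set ρ := dowlingRatio m c (n + 1) + m with hρdef
  have hρ : 0 < ρ := by positivity
  obtain ⟨F, hF⟩ := summable_neg_inv_mul_dobinskiWeight hm hc (n + 1) hρ
  obtain ⟨P, hP⟩ : Summable fun j : ℕ =>
      -(m * (j + 1 : ℕ) + c + ρ)⁻¹ * dobinskiWeight m c (n + 1) j := by
    refine (summable_neg_inv_mul_dobinskiWeight hm hc (n + 1) (add_pos hρ hm)).congr fun j => ?_
    push_cast
    ring_nf
  have hgap := le_sub_of_hasSum_neg_inv_mul_dobinskiWeight hm hc (n + 1) hρ hF hP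
  have hcov := hasSum_cov_le (dobinskiWeight_nonneg hm.le hc (n + 1))
    (hasSum_dobinskiWeight hm.ne' c (n + 1)) hF
    (hasSum_dobinskiNode_mul_dobinskiWeight hm hc (n + 1))
    (hasSum_dobinskiScore_mul_dobinskiWeight hm hc (n + 1))
    ((hasSum_mul_dobinskiScore_iff hm hc (n + 1)).2 hP)
    (hasSum_dobinskiNode_sq_mul_dobinskiWeight hm hc (n + 1))
    (neg_inv_sub_mul_dobinskiScore_sub_le hm hc n hρ hn)
  have hW : 0 < (dowlingPoly m c (n + 1)).eval 1 * Real.exp m⁻¹ :=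
    mul_pos (eval_one_dowlingPoly_pos hm.le hc _) (Real.exp_pos _)
  set W := (dowlingPoly m c (n + 1)).eval 1 * Real.exp m⁻¹
  set V := pgfVariance (dowlingPoly m c (n + 1))
  have hratio : m / (2 * ρ) ^ 2 ≤ 2 / (m * n * ρ) * (m + m ^ 2 * V) := by
    rw [← hρdef, ← two_mul] at hgap
    refine le_of_mul_le_mul_right ?_ (pow_pos hW 2)
    linarith [mul_le_mul_of_nonneg_right hgap hW.le]
  have hn' : (0 : ℝ) < n := by exact_mod_cast hn
  rw [div_mul_eq_mul_div, div_le_div_iff₀ (by positivity) (by positivity)] at hratio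
  refine le_of_mul_le_mul_right ?_ (mul_pos hm hρ)
  linarith

theorem tendsto_pgfVariance_dowlingPoly_atTop :
    Tendsto (fun n => pgfVariance (dowlingPoly m c n)) atTop atTop := by
  rw [← tendsto_add_atTop_iff_nat 1]
  have hratio : Tendsto (fun n : ℕ => (n : ℝ) / (dowlingRatio m c n + m)) atTop atTop := by
    have hsmall : (fun n => dowlingRatio m c n + m) =o[atTop] fun n : ℕ => (n : ℝ) :=
      (dowlingRatio_isLittleO hm hc).add
        (Asymptotics.isLittleO_const_left.2 (.inr (tendsto_norm_atTop_atTop.comp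
          tendsto_natCast_atTop_atTop)))
    have hpos : ∀ᶠ n : ℕ in atTop, (dowlingRatio m c n + m) / (n : ℝ) ∈ Set.Ioi 0 := by
      filter_upwards [eventually_gt_atTop 0] with n hn
      have := dowlingRatio_pos hm.le hc n
      rw [Set.mem_Ioi]
      positivity
    exact (tendsto_nhdsWithin_iff.2
      ⟨hsmall.tendsto_div_nhds_zero, hpos⟩).inv_tendsto_nhdsGT_zero.congr fun n => inv_div _ _
  refine tendsto_atTop_mono (fun n => ?_)
    ((tendsto_atTop_add_const_right atTop (-(9 / m))
      (hratio.comp (tendsto_add_atTop_nat 1))).atTop_div_const (by norm_num : (0 : ℝ) < 8))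
  have hρ : 0 < dowlingRatio m c (n + 1) + m := add_pos (dowlingRatio_pos hm.le hc _) hm
  have hbound := mul_le_mul_one_add_pgfVariance_dowlingPoly hm hc n
  have hratio_le : (n + 1) / (dowlingRatio m c (n + 1) + m) ≤
      8 * pgfVariance (dowlingPoly m c (n + 1)) + 9 / m := by
    rw [add_div' _ _ _ hm.ne', div_le_div_iff₀ hρ hm]
    linarith [dowlingRatio_pos hm.le hc (n + 1)]
  rw [Function.comp_apply, Nat.cast_add_one]
  linarith

end

theorem stmt_19_general {m c : ℝ} (hm : 0 < m) (hc : 0 ≤ c) (x : ℝ) :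
    Tendsto
      (fun n : ℕ => ∑ k ∈ Finset.range (n + 1) with ((k : ℕ) : ℝ) ≤
          pgfMean (dowlingPoly m c n) + x * Real.sqrt (pgfVariance (dowlingPoly m c n)),
        (dowlingPoly m c n).coeff k / (dowlingPoly m c n).eval 1)
      atTop
      (nhds ((Real.sqrt (2 * Real.pi))⁻¹ * ∫ t in Set.Iic x, Real.exp (-t ^ 2 / 2))) :=
  tendsto_sum_coeff_le_of_pgfVariance_tendsto_atTop
    (dowlingPoly_mem_nonposRootSubmonoid hm.le hc) (natDegree_dowlingPoly_le m c)
    (tendsto_pgfVariance_dowlingPoly_atTop hm hc) x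

section natCast

variable (m c n : ℕ)

lemma coeff_dowlingPoly_natCast (k : ℕ) : (dowlingPoly m c n).coeff k = Tnk m c n k := by
  induction n generalizing k with
  | zero => cases k <;> simp [dowlingPoly, Tnk, Polynomial.coeff_one]
  | succ n ih =>
    cases k with
    | zero => rw [coeff_dowlingPoly_succ_zero, ih, Tnk, Nat.cast_mul]
    | succ k =>
      rw [coeff_dowlingPoly_succ_succ, ih, ih, Tnk]
      push_cast
      rfl

lemma eval_one_dowlingPoly_natCast : (dowlingPoly m c n).eval 1 = Ttot m c n := by
  simp only [eval_one_eq_sum_range (natDegree_dowlingPoly_le m c n), coeff_dowlingPoly_natCast,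
    Ttot, Nat.cast_sum]

lemma pgfMean_dowlingPoly_natCast : pgfMean (dowlingPoly m c n) = En m c n := by
  simp only [pgfMean_eq_sum (natDegree_dowlingPoly_le m c n), coeff_dowlingPoly_natCast, En, Ttot,
    Nat.cast_sum]

lemma pgfVariance_dowlingPoly_natCast : pgfVariance (dowlingPoly m c n) = Vn m c n := by
  simp only [pgfVariance_eq_sum (natDegree_dowlingPoly_le m c n), coeff_dowlingPoly_natCast, Vn,
    pgfMean_dowlingPoly_natCast, Ttot, Nat.cast_sum]

end natCast

/-- Asymptotic normality: for every real `x`,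
`P(ξ_n ≤ E_n + x·√V_n) = ∑_{k ≤ E_n + x·√V_n} T_{n,k}/T_n` converges to
`Φ(x) = (2π)^{-1/2} ∫_{-∞}^x e^{-t²/2} dt` as `n → ∞`. -/
theorem stmt_19 (m c : ℕ) (hm : 0 < m) (hc : 0 < c) (x : ℝ) :
    Tendsto
      (fun n : ℕ =>
        ∑ k ∈ (Finset.range (n + 1)).filter
            (fun k : ℕ => (k : ℝ) ≤ En m c n + x * Real.sqrt (Vn m c n)),
          (Tnk m c n k : ℝ) / Ttot m c n)
      atTop
      (nhds ((Real.sqrt (2 * Real.pi))⁻¹ * ∫ t in Set.Iic x, Real.exp (-t ^ 2 / 2))) := by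
  simpa only [coeff_dowlingPoly_natCast, eval_one_dowlingPoly_natCast,
    pgfMean_dowlingPoly_natCast, pgfVariance_dowlingPoly_natCast] using
      stmt_19_general (Nat.cast_pos.2 hm) (Nat.cast_nonneg c) x
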